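/- Let E be a finite-dimensional algebra over a field k of characteristic zero with Jacobson radical J. Then there exists a subalgebra T of E such that the restriction of the quotient map E → E/J to T is an isomorphism (Wedderburn–Malcev splitting). -/

import Mathlib

/-!
The trace form of a finite-dimensional semisimple algebra `A` in characteristic zero is
nondegenerate: its radical is a left ideal, hence generated by an idempotent, and an idempotent
of trace zero vanishes. A basis of `A` and its dual basis for the trace form therefore give a
separability idempotent `∑ eᵢ ⊗ fᵢ` of `A`.

Given such an idempotent, let `s : A → E` be linear and unital with multiplicative defect
`F a b = s a * s b - s (a * b)` in a two-sided ideal `I`. Modulo `I ^ 2`, `F` is a Hochschild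
2-cocycle, and it is the coboundary of its contraction `h a = ∑ s eᵢ * F fᵢ a` with
`∑ eᵢ ⊗ fᵢ`. So `s - h` has its defect in `I ^ 2`, and if `I` is nilpotent then iterating turns
`s` into an algebra homomorphism, as in Newton's method. For `A = E ⧸ J`, start from a linear
section of `E → E ⧸ J`.
-/

open scoped TensorProduct

section MulDefect

variable {R A E : Type*} [CommRing R] [Ring A] [Algebra R A] [Ring E] [Algebra R E]

/-- The multiplicative defect `(a, b) ↦ s a * s b - s (a * b)` of a linear map `s` between
algebras, as a bilinear map. -/
def mulDefect (s : A →ₗ[R] E) : A →ₗ[R] A →ₗ[R] E :=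
  (LinearMap.mul R E).compl₁₂ s s - (LinearMap.mul R A).compr₂ s

theorem mulDefect_apply (s : A →ₗ[R] E) (a b : A) :
    mulDefect s a b = s a * s b - s (a * b) := rfl

theorem mulDefect_apply_one {s : A →ₗ[R] E} (hs : s 1 = 1) (a : A) : mulDefect s a 1 = 0 := by
  simp [mulDefect_apply, hs]

theorem mulDefect_cocycle (s : A →ₗ[R] E) (a b c : A) :
    mulDefect s a b * s c - mulDefect s a (b * c) =
      s a * mulDefect s b c - mulDefect s (a * b) c := by
  simp only [mulDefect_apply, mul_assoc, mul_sub, sub_mul]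
  abel

theorem mulDefect_sub (s h : A →ₗ[R] E) (a b : A) :
    mulDefect (s - h) a b =
      mulDefect s a b - (s a * h b - h (a * b) + h a * s b) + h a * h b := by
  simp only [mulDefect_apply, LinearMap.sub_apply, mul_sub, sub_mul]
  abel

end MulDefect

section SeparabilityIdempotent

variable {R A ι : Type*} [CommRing R] [Ring A] [Algebra R A] [Fintype ι]

/-- The tensor `∑ i, e i ⊗ₜ f i` is a separability idempotent of the `R`-algebra `A`. It is
encoded by the two families because the linear maps built from it are sums over `i`. -/
structure IsSeparabilityIdempotent (R : Type*) {A ι : Type*} [CommRing R] [Ring A] [Algebra R A]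
    [Fintype ι] (e f : ι → A) : Prop where
  sum_mul_eq_one : ∑ i, e i * f i = 1
  sum_mul_tmul : ∀ a, ∑ i, (a * e i) ⊗ₜ[R] f i = ∑ i, e i ⊗ₜ[R] (f i * a)

theorem IsSeparabilityIdempotent.sum_apply_mul_left {M : Type*} [AddCommGroup M] [Module R M]
    {e f : ι → A} (h : IsSeparabilityIdempotent R e f) (B : A →ₗ[R] A →ₗ[R] M) (a : A) :
    ∑ i, B (a * e i) (f i) = ∑ i, B (e i) (f i * a) := by
  simpa only [map_sum, TensorProduct.lift.tmul] using
    congrArg (TensorProduct.lift B) (h.sum_mul_tmul a)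

end SeparabilityIdempotent

section Correction

variable {R A E ι : Type*} [CommRing R] [Ring A] [Algebra R A] [Ring E] [Algebra R E] [Fintype ι]

/-- The contraction `a ↦ ∑ i, s (e i) * mulDefect s (f i) a` of the defect of `s` with
`∑ i, e i ⊗ₜ f i`. If the defect of `s` lies in a two-sided ideal `I`, that of `s` minus
this correction lies in `I * I`. -/
def defectCorrection (e f : ι → A) (s : A →ₗ[R] E) : A →ₗ[R] E :=
  ∑ i, LinearMap.mulLeft R (s (e i)) ∘ₗ mulDefect s (f i)

theorem defectCorrection_apply (e f : ι → A) (s : A →ₗ[R] E) (a : A) :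
    defectCorrection e f s a = ∑ i, s (e i) * mulDefect s (f i) a := by
  simp [defectCorrection, LinearMap.sum_apply]

theorem defectCorrection_apply_one (e f : ι → A) {s : A →ₗ[R] E} (hs : s 1 = 1) :
    defectCorrection e f s 1 = 0 := by
  simp [defectCorrection_apply, mulDefect_apply_one hs]

theorem defectCorrection_mem (e f : ι → A) {s : A →ₗ[R] E} {I : Ideal E}
    (hI : ∀ a b, mulDefect s a b ∈ I) (a : A) : defectCorrection e f s a ∈ I := by
  rw [defectCorrection_apply]
  exact I.sum_mem fun i _ ↦ I.mul_mem_left _ (hI _ _)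

namespace IsSeparabilityIdempotent

variable {e f : ι → A}

theorem sum_map_mul_map (h : IsSeparabilityIdempotent R e f) {s : A →ₗ[R] E} (hs : s 1 = 1) :
    ∑ i, s (e i) * s (f i) = 1 + ∑ i, mulDefect s (e i) (f i) := by
  simp only [mulDefect_apply, Finset.sum_sub_distrib, ← map_sum, h.sum_mul_eq_one, hs]
  abel

theorem sum_map_mul_mulDefect_mul (h : IsSeparabilityIdempotent R e f) (s : A →ₗ[R] E)
    (a b : A) :
    ∑ i, s (e i) * mulDefect s (f i * a) b =
      s a * defectCorrection e f s b - ∑ i, mulDefect s a (e i) * mulDefect s (f i) b := by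
  calc ∑ i, s (e i) * mulDefect s (f i * a) b
      = ∑ i, s (a * e i) * mulDefect s (f i) b :=
        (h.sum_apply_mul_left ((LinearMap.mul R E).compl₁₂ s ((mulDefect s).flip b)) a).symm
    _ = ∑ i, (s a * s (e i) - mulDefect s a (e i)) * mulDefect s (f i) b := by
        simp only [mulDefect_apply s a, sub_sub_cancel]
    _ = s a * defectCorrection e f s b - ∑ i, mulDefect s a (e i) * mulDefect s (f i) b := by
        simp only [sub_mul, Finset.sum_sub_distrib, defectCorrection_apply, Finset.mul_sum,
          mul_assoc]

theorem coboundary_defectCorrection (h : IsSeparabilityIdempotent R e f) {s : A →ₗ[R] E}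
    (hs : s 1 = 1) (a b : A) :
    s a * defectCorrection e f s b - defectCorrection e f s (a * b) +
        defectCorrection e f s a * s b =
      mulDefect s a b + (∑ i, mulDefect s (e i) (f i)) * mulDefect s a b +
        ∑ i, mulDefect s a (e i) * mulDefect s (f i) b := by
  have right_terms : defectCorrection e f s a * s b - defectCorrection e f s (a * b) =
      (∑ i, s (e i) * s (f i)) * mulDefect s a b -
        ∑ i, s (e i) * mulDefect s (f i * a) b := by
    simp only [defectCorrection_apply, Finset.sum_mul, ← Finset.sum_sub_distrib, mul_assoc,
      ← mul_sub, mulDefect_cocycle]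
  rw [sub_add_eq_add_sub, add_sub_assoc, right_terms, h.sum_map_mul_map hs,
    h.sum_map_mul_mulDefect_mul, add_mul, one_mul]
  abel

theorem mulDefect_sub_defectCorrection_mem (h : IsSeparabilityIdempotent R e f)
    {s : A →ₗ[R] E} (hs : s 1 = 1) {I : Ideal E} [I.IsTwoSided]
    (hI : ∀ a b, mulDefect s a b ∈ I) (a b : A) :
    mulDefect (s - defectCorrection e f s) a b ∈ I * I := by
  have hF : (∑ i, mulDefect s (e i) (f i)) * mulDefect s a b ∈ I * I :=
    Ideal.mul_mem_mul (I.sum_mem fun i _ ↦ hI _ _) (hI a b)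
  have hFF : ∑ i, mulDefect s a (e i) * mulDefect s (f i) b ∈ I * I :=
    (I * I).sum_mem fun i _ ↦ Ideal.mul_mem_mul (hI _ _) (hI _ _)
  have hh : defectCorrection e f s a * defectCorrection e f s b ∈ I * I :=
    Ideal.mul_mem_mul (defectCorrection_mem e f hI a) (defectCorrection_mem e f hI b)
  rw [mulDefect_sub, h.coboundary_defectCorrection hs, add_assoc, sub_add_cancel_left]
  exact add_mem (neg_mem (add_mem hF hFF)) hh

theorem exists_mulDefect_mem_pow_two_pow (h : IsSeparabilityIdempotent R e f)
    {s : A →ₗ[R] E} (hs : s 1 = 1) {I : Ideal E} [I.IsTwoSided]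
    (hI : ∀ a b, mulDefect s a b ∈ I) (n : ℕ) :
    ∃ s' : A →ₗ[R] E, s' 1 = 1 ∧ (∀ a, s' a - s a ∈ I) ∧
      ∀ a b, mulDefect s' a b ∈ I ^ 2 ^ n := by
  induction n with
  | zero => exact ⟨s, hs, by simp, by simpa [Submodule.pow_one] using hI⟩
  | succ n ih =>
    obtain ⟨s', hs', hsub, hdefect⟩ := ih
    refine ⟨s' - defectCorrection e f s', ?_, fun a ↦ ?_, ?_⟩
    · simp [hs', defectCorrection_apply_one e f hs']
    · rw [LinearMap.sub_apply, sub_right_comm]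
      exact sub_mem (hsub a)
        (Ideal.pow_le_self (by positivity) (defectCorrection_mem e f hdefect a))
    · rw [pow_succ, mul_two, Ideal.IsTwoSided.pow_add]
      exact h.mulDefect_sub_defectCorrection_mem hs' hdefect

theorem exists_algHom_sub_mem (h : IsSeparabilityIdempotent R e f) {s : A →ₗ[R] E}
    (hs : s 1 = 1) {I : Ideal E} [I.IsTwoSided] (hnil : IsNilpotent I)
    (hI : ∀ a b, mulDefect s a b ∈ I) : ∃ σ : A →ₐ[R] E, ∀ a, σ a - s a ∈ I := by
  obtain ⟨n, hn⟩ := hnil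
  obtain ⟨s', hs', hsub, hdefect⟩ := h.exists_mulDefect_mem_pow_two_pow hs hI n
  have hmul (a b : A) : s' (a * b) = s' a * s' b := by
    have hmem : mulDefect s' a b ∈ I ^ n :=
      Ideal.pow_le_pow_right n.lt_two_pow_self.le (hdefect a b)
    rw [hn, Ideal.zero_eq_bot, Ideal.mem_bot, mulDefect_apply] at hmem
    exact (sub_eq_zero.1 hmem).symm
  exact ⟨AlgHom.ofLinearMap s' hs' hmul, hsub⟩

end IsSeparabilityIdempotent

end Correction

section Lifting

variable {R A E : Type*} [CommRing R] [Ring A] [Algebra R A] [Ring E] [Algebra R E]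

theorem exists_linearMap_rightInverse_map_one [Module.Projective R A] {π : E →ₐ[R] A}
    (hπ : Function.Surjective π) (hnil : ∀ x ∈ RingHom.ker π, IsNilpotent x) :
    ∃ s : A →ₗ[R] E, (∀ a, π (s a) = a) ∧ s 1 = 1 := by
  obtain ⟨s, hs⟩ := π.toLinearMap.exists_rightInverse_of_surjective (LinearMap.range_eq_top.2 hπ)
  replace hs (a : A) : π (s a) = a := LinearMap.congr_fun hs a
  have hker : 1 - s 1 ∈ RingHom.ker π := by simp [RingHom.mem_ker, hs]
  obtain ⟨u, hu⟩ : IsUnit (s 1) := by simpa using (hnil _ hker).isUnit_one_sub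
  have hπu : π ↑u⁻¹ = 1 := by
    rw [← one_mul (π ↑u⁻¹), ← hs 1, ← hu, ← map_mul, u.mul_inv, map_one, hu, hs]
  exact ⟨LinearMap.mulRight R ↑u⁻¹ ∘ₗ s, by simp [hs, hπu], by simp [← hu]⟩

theorem IsSeparabilityIdempotent.exists_algHom_rightInverse [Module.Projective R A]
    {ι : Type*} [Fintype ι] {e f : ι → A} (h : IsSeparabilityIdempotent R e f)
    {π : E →ₐ[R] A} (hπ : Function.Surjective π) (hnil : IsNilpotent (RingHom.ker π)) :
    ∃ σ : A →ₐ[R] E, Function.RightInverse σ π := by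
  have hnil_mem (x : E) (hx : x ∈ RingHom.ker π) : IsNilpotent x := by
    obtain ⟨n, hn⟩ := hnil
    exact ⟨n, by simpa [hn] using Ideal.pow_mem_pow hx n⟩
  obtain ⟨s, hs, hs_one⟩ := exists_linearMap_rightInverse_map_one hπ hnil_mem
  have hdefect (a b : A) : mulDefect s a b ∈ RingHom.ker π := by
    simp [RingHom.mem_ker, mulDefect_apply, hs]
  obtain ⟨σ, hσ⟩ := h.exists_algHom_sub_mem hs_one hnil hdefect
  refine ⟨σ, fun a ↦ ?_⟩
  simpa [RingHom.mem_ker, hs, sub_eq_zero] using hσ a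

theorem existsUnique_mem_range_sub_mem_ker {π : E →ₐ[R] A} {σ : A →ₐ[R] E}
    (h : Function.RightInverse σ π) (x : E) :
    ∃! t : σ.range, x - (t : E) ∈ RingHom.ker π := by
  refine ⟨⟨σ (π x), π x, rfl⟩, ?_, ?_⟩
  · simp [RingHom.mem_ker, h (π x)]
  · rintro ⟨_, a, rfl⟩ ha
    have hxa : π x = a := by simpa [RingHom.mem_ker, h a, sub_eq_zero] using ha
    exact Subtype.ext (congrArg σ hxa.symm)

end Lifting

section DualBasis

variable {k A ι : Type*} [Field k]

theorem repr_eq_apply_dualBasis {V : Type*} [AddCommGroup V] [Module k V] [Finite ι]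
    [DecidableEq ι] {B : LinearMap.BilinForm k V} (hB : B.Nondegenerate) (b : Module.Basis ι k V)
    (x : V) (i : ι) : b.repr x i = B (B.dualBasis hB b i) x := by
  suffices b.coord i = B (B.dualBasis hB b i) from LinearMap.congr_fun this x
  refine b.ext fun j ↦ ?_
  rw [LinearMap.BilinForm.apply_dualBasis_left, b.coord_apply, b.repr_self, Finsupp.single_apply]

theorem sum_mul_tmul_dualBasis [Ring A] [Algebra k A] [Fintype ι] [DecidableEq ι]
    {B : LinearMap.BilinForm k A} (hB : B.Nondegenerate)
    (hassoc : ∀ x y z, B (x * y) z = B x (y * z)) (b : Module.Basis ι k A) (a : A) :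
    ∑ i, (a * b i) ⊗ₜ[k] B.dualBasis hB b i = ∑ i, b i ⊗ₜ[k] (B.dualBasis hB b i * a) := by
  set f := B.dualBasis hB b
  have expand_left (i : ι) : a * b i = ∑ j, B (f j) (a * b i) • b j := by
    simp only [f, ← repr_eq_apply_dualBasis, b.sum_repr]
  have expand_right (j : ι) : f j * a = ∑ i, B (f j) (a * b i) • f i := by
    conv_lhs => rw [← f.sum_repr (f j * a)]
    simp only [f, LinearMap.BilinForm.dualBasis_repr_apply, hassoc]
  calc ∑ i, (a * b i) ⊗ₜ[k] f i
      = ∑ i, ∑ j, (B (f j) (a * b i) • b j) ⊗ₜ[k] f i := by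
        simp only [← TensorProduct.sum_tmul, ← expand_left]
    _ = ∑ j, ∑ i, b j ⊗ₜ[k] (B (f j) (a * b i) • f i) := by
        rw [Finset.sum_comm]
        simp only [TensorProduct.smul_tmul]
    _ = ∑ j, b j ⊗ₜ[k] (f j * a) := by
        simp only [← TensorProduct.tmul_sum, ← expand_right]

end DualBasis

section RegularTrace

/-- The trace of left multiplication, for an algebra that need not be commutative
(`Algebra.trace` asks for commutativity). -/
noncomputable def regularTrace (R A : Type*) [CommRing R] [Ring A] [Algebra R A] : A →ₗ[R] R :=
  LinearMap.trace R A ∘ₗ (Algebra.lmul R A).toLinearMap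

/-- The trace form `(x, y) ↦ regularTrace R A (x * y)` of an algebra that need not be
commutative. -/
noncomputable def regularTraceForm (R A : Type*) [CommRing R] [Ring A] [Algebra R A] :
    LinearMap.BilinForm R A :=
  (LinearMap.mul R A).compr₂ (regularTrace R A)

section CommRing

variable {R A : Type*} [CommRing R] [Ring A] [Algebra R A]

theorem regularTrace_apply (x : A) :
    regularTrace R A x = LinearMap.trace R A (Algebra.lmul R A x) := rfl

theorem regularTraceForm_apply (x y : A) :
    regularTraceForm R A x y = regularTrace R A (x * y) := rfl

theorem regularTrace_mul_comm (x y : A) : regularTrace R A (x * y) = regularTrace R A (y * x) := by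
  simp only [regularTrace_apply, map_mul, LinearMap.trace_mul_comm]

theorem regularTraceForm_mul_left (x y z : A) :
    regularTraceForm R A (x * y) z = regularTraceForm R A x (y * z) := by
  simp only [regularTraceForm_apply, mul_assoc]

theorem regularTraceForm_isSymm : (regularTraceForm R A).IsSymm :=
  ⟨regularTrace_mul_comm⟩

theorem regularTrace_eq_sum_repr {ι : Type*} [Fintype ι] (b : Module.Basis ι R A) (x : A) :
    regularTrace R A x = ∑ i, b.repr (x * b i) i := by
  classical
  simp [regularTrace_apply, LinearMap.trace_eq_matrix_trace R b, Matrix.trace,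
    LinearMap.toMatrix_apply]

end CommRing

variable {k A : Type*} [Field k] [Ring A] [Algebra k A]

theorem eq_zero_of_isIdempotentElem_of_regularTrace_eq_zero [CharZero k] [FiniteDimensional k A]
    {e : A} (he : IsIdempotentElem e) (htr : regularTrace k A e = 0) : e = 0 :=
  Algebra.lmul_injective (R := k) <| by
    rw [LinearMap.IsIdempotentElem.eq_zero_of_trace_eq_zero (he.map (Algebra.lmul k A)) htr,
      map_zero]

theorem regularTraceForm_nondegenerate [CharZero k] [FiniteDimensional k A]
    [IsSemisimpleRing A] : (regularTraceForm k A).Nondegenerate := by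
  refine (LinearMap.IsRefl.nondegenerate_iff_separatingLeft (B := regularTraceForm k A)
    regularTraceForm_isSymm.isRefl).2 fun x hx ↦ ?_
  let radical : Ideal A :=
    { LinearMap.ker (regularTraceForm k A) with
      smul_mem' := fun a y hy ↦ LinearMap.ext fun z ↦ by
        rw [smul_eq_mul, regularTraceForm_isSymm.eq, ← regularTraceForm_mul_left,
          regularTraceForm_isSymm.eq, LinearMap.mem_ker.1 hy, LinearMap.zero_apply,
          LinearMap.zero_apply] }
  obtain ⟨e, he, hspan⟩ := IsSemisimpleRing.ideal_eq_span_idempotent radical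
  have he_mem : e ∈ radical := hspan ▸ Ideal.mem_span_singleton_self e
  have he_trace : regularTrace k A e = 0 := by
    simpa [regularTraceForm_apply] using LinearMap.congr_fun he_mem 1
  have he_zero : e = 0 := eq_zero_of_isIdempotentElem_of_regularTrace_eq_zero he he_trace
  have hx_mem : x ∈ radical := LinearMap.ext hx
  simpa [hspan, he_zero] using hx_mem

theorem sum_mul_dualBasis_regularTraceForm {ι : Type*} [Fintype ι] [DecidableEq ι]
    (hB : (regularTraceForm k A).Nondegenerate) (b : Module.Basis ι k A) :
    ∑ i, b i * (regularTraceForm k A).dualBasis hB b i = 1 := by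
  rw [← sub_eq_zero]
  refine hB.1 _ fun y ↦ ?_
  rw [regularTraceForm_isSymm.eq, map_sub, sub_eq_zero]
  calc regularTraceForm k A y (∑ i, b i * (regularTraceForm k A).dualBasis hB b i)
      = ∑ i, regularTraceForm k A ((regularTraceForm k A).dualBasis hB b i) (y * b i) := by
        simp only [map_sum, ← regularTraceForm_mul_left, regularTraceForm_isSymm.eq (y * _)]
    _ = regularTraceForm k A y 1 := by
        simp only [← repr_eq_apply_dualBasis, ← regularTrace_eq_sum_repr, regularTraceForm_apply,
          mul_one]

theorem isSeparabilityIdempotent_dualBasis_regularTraceForm {ι : Type*} [Fintype ι] [DecidableEq ι]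
    (hB : (regularTraceForm k A).Nondegenerate) (b : Module.Basis ι k A) :
    IsSeparabilityIdempotent k b ((regularTraceForm k A).dualBasis hB b) where
  sum_mul_eq_one := sum_mul_dualBasis_regularTraceForm hB b
  sum_mul_tmul := sum_mul_tmul_dualBasis hB regularTraceForm_mul_left b

end RegularTrace

theorem mem_jacobson_bot_iff_mem_ringJacobson {R : Type*} [Ring R] {x : R} :
    x ∈ (⊥ : TwoSidedIdeal R).jacobson ↔ x ∈ Ring.jacobson R := by
  rw [← TwoSidedIdeal.mem_asIdeal, TwoSidedIdeal.asIdeal_jacobson, TwoSidedIdeal.bot_asIdeal,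
    Ideal.jacobson_bot]

theorem wedderburn_malcev_splitting_general (k E : Type*) [Field k] [CharZero k] [Ring E]
    [Algebra k E] [IsSemiprimaryRing E] [FiniteDimensional k (E ⧸ Ring.jacobson E)] :
    ∃ T : Subalgebra k E, ∀ x : E, ∃! t : T, x - (t : E) ∈ (⊥ : TwoSidedIdeal E).jacobson := by
  let π : E →ₐ[k] E ⧸ Ring.jacobson E := Ideal.Quotient.mkₐ k (Ring.jacobson E)
  have hker : RingHom.ker π = Ring.jacobson E := Ideal.Quotient.mkₐ_ker k _
  have hsep := isSeparabilityIdempotent_dualBasis_regularTraceForm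
    regularTraceForm_nondegenerate (Module.finBasis k (E ⧸ Ring.jacobson E))
  obtain ⟨σ, hσ⟩ := hsep.exists_algHom_rightInverse (π := π) Ideal.Quotient.mk_surjective
    (by rw [hker]; exact IsSemiprimaryRing.isNilpotent)
  refine ⟨σ.range, fun x ↦ ?_⟩
  simpa only [hker, mem_jacobson_bot_iff_mem_ringJacobson] using
    existsUnique_mem_range_sub_mem_ker hσ x

/-- Wedderburn–Malcev splitting: if `E` is a finite-dimensional algebra over a field `k`
of characteristic zero with Jacobson radical `J`, then there is a subalgebra `T ⊆ E` such
that the restriction of the quotient map `E → E/J` to `T` is an isomorphism; equivalently,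
every element of `E` has a unique representative in `T` modulo `J`. -/
theorem wedderburn_malcev_splitting
    (k E : Type*) [Field k] [CharZero k] [Ring E] [Algebra k E] [FiniteDimensional k E] :
    ∃ T : Subalgebra k E, ∀ x : E, ∃! t : T, x - (t : E) ∈ (⊥ : TwoSidedIdeal E).jacobson := by
  have : IsArtinianRing E := .of_finite k E
  exact wedderburn_malcev_splitting_general k E
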